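/- arXiv:math/0406504 — 4 statements merged into one kernel-verified Lean document; each statement's English description precedes it below -/
import Mathlib

section
/- For k = 2 and k = 3, for all n ≥ 1 and all ε ∈ (0,1/2), the unique best protocol up to π_S for maximizing 𝒫(f_1,…,f_k;ε) over protocols of balanced functions is f_1 = ⋯ = f_k = f, where f(x) = x_1. -/
open Finset

/-- Probability weight of receiving `y` when the source string is `x`: each bit of `x`
is flipped independently with probability `ε`. -/
noncomputable def noiseWt (ε : ℝ) {n : ℕ} (x y : Fin n → Bool) : ℝ :=
  ∏ j : Fin n, if y j = x j then 1 - ε else ε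

/-- A function is balanced if it takes the values `false` and `true` equally often. -/
def BalancedFn {n : ℕ} (f : (Fin n → Bool) → Bool) : Prop :=
  (Finset.univ.filter fun x : Fin n → Bool => f x = false).card =
    (Finset.univ.filter fun x : Fin n → Bool => f x = true).card

/-- The transformation `π_S` : permute coordinates by `π` and flip the bits outside `S`. -/
def piS {n : ℕ} (π : Equiv.Perm (Fin n)) (S : Finset (Fin n)) (x : Fin n → Bool) :
    Fin n → Bool :=
  fun i => if i ∈ S then x (π i) else !(x (π i))

/-- `𝒫(f₁,…,f_k; ε)`: the probability that all `k` parties agree, where the source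
`x` is uniform on `{0,1}^n` and party `i` receives an independent `ε`-corruption `yᵢ` of `x`. -/
noncomputable def agreeProb (ε : ℝ) (n k : ℕ) (fs : Fin k → (Fin n → Bool) → Bool) : ℝ :=
  ((2 : ℝ) ^ n)⁻¹ * ∑ x : Fin n → Bool, ∑ ys : Fin k → Fin n → Bool,
    (∏ i : Fin k, noiseWt ε x (ys i)) *
      (if ∀ i j : Fin k, fs i (ys i) = fs j (ys j) then 1 else 0)


noncomputable def sg (b : Bool) : ℝ := if b then -1 else 1

lemma sg_mul_self (b : Bool) : sg b * sg b = 1 := by cases b <;> simp [sg]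

noncomputable def chi {n : ℕ} (S : Finset (Fin n)) (x : Fin n → Bool) : ℝ := ∏ i ∈ S, sg (x i)

noncomputable def cf {n : ℕ} (F : (Fin n → Bool) → ℝ) (S : Finset (Fin n)) : ℝ :=
  ∑ x, F x * chi S x

noncomputable def Uop (ε : ℝ) {n : ℕ} (F : (Fin n → Bool) → ℝ) (x : Fin n → Bool) : ℝ :=
  ∑ y, noiseWt ε x y * F y

lemma complete {n : ℕ} (x y : Fin n → Bool) :
    ∑ S : Finset (Fin n), chi S x * chi S y = if x = y then (2:ℝ)^n else 0 := by
  have h : ∑ S : Finset (Fin n), chi S x * chi S y = ∏ i : Fin n, (1 + sg (x i) * sg (y i)) := by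
    rw [Finset.prod_one_add, Finset.powerset_univ]
    exact Finset.sum_congr rfl fun S _ => by simp [chi, Finset.prod_mul_distrib]
  rw [h]
  split_ifs with hxy
  · subst hxy
    simp [sg_mul_self]; norm_num
  · obtain ⟨i, hi⟩ := Function.ne_iff.mp hxy
    apply Finset.prod_eq_zero (Finset.mem_univ i)
    revert hi
    cases x i <;> cases y i <;> simp [sg]

lemma inversion {n : ℕ} (F : (Fin n → Bool) → ℝ) (x : Fin n → Bool) :
    ∑ S, cf F S * chi S x = 2^n * F x := by
  simp only [cf, Finset.sum_mul]
  rw [Finset.sum_comm]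
  have : ∀ y, ∑ S, F y * chi S y * chi S x = F y * (if y = x then (2:ℝ)^n else 0) := by
    intro y
    rw [← complete, Finset.mul_sum]
    exact Finset.sum_congr rfl fun S _ => by ring
  simp only [this]
  simp [mul_comm]

lemma parseval {n : ℕ} (F : (Fin n → Bool) → ℝ) :
    ∑ S, cf F S ^ 2 = 2^n * ∑ x, F x ^ 2 := by
  have : ∀ S, cf F S ^ 2 = ∑ x, F x * (cf F S * chi S x) := by
    intro S
    rw [sq]
    nth_rw 2 [cf]
    rw [Finset.mul_sum]
    exact Finset.sum_congr rfl fun S _ => by ring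
  simp only [this]
  rw [Finset.sum_comm, Finset.mul_sum]
  refine Finset.sum_congr rfl fun x _ => ?_
  rw [← Finset.mul_sum, inversion]; ring

lemma noise_symm (ε : ℝ) {n : ℕ} (x y : Fin n → Bool) : noiseWt ε x y = noiseWt ε y x := by
  simp only [noiseWt, eq_comm]

lemma sum_noise_chi (ε : ℝ) {n : ℕ} (S : Finset (Fin n)) (x : Fin n → Bool) :
    ∑ y, noiseWt ε x y * chi S y = (1 - 2*ε)^S.card * chi S x := by
  have h1 : ∀ y, noiseWt ε x y * chi S y =
      ∏ j, ((if y j = x j then 1 - ε else ε) * (if j ∈ S then sg (y j) else 1)) := by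
    intro y
    rw [Finset.prod_mul_distrib, noiseWt, chi, Finset.prod_ite_mem, Finset.univ_inter]
  simp only [h1]
  have h2 := Finset.prod_univ_sum (fun _ : Fin n => (Finset.univ : Finset Bool))
    (fun j b => ((if b = x j then 1 - ε else ε) * (if j ∈ S then sg b else 1)))
  rw [Fintype.piFinset_univ] at h2
  rw [← h2]
  have h3 : ∀ j, ∑ b, ((if b = x j then 1 - ε else ε) * (if j ∈ S then sg b else 1))
      = if j ∈ S then (1-2*ε) * sg (x j) else 1 := by
    intro j
    cases x j <;> by_cases h : j ∈ S <;> simp [h, sg] <;> ring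
  simp only [h3]
  rw [Finset.prod_ite_mem, Finset.univ_inter, Finset.prod_mul_distrib, Finset.prod_const, chi]

lemma cf_U (ε : ℝ) {n : ℕ} (F : (Fin n → Bool) → ℝ) (S : Finset (Fin n)) :
    cf (Uop ε F) S = (1 - 2*ε)^S.card * cf F S := by
  simp only [cf, Uop, Finset.sum_mul]
  rw [Finset.sum_comm, Finset.mul_sum]
  refine Finset.sum_congr rfl fun y _ => ?_
  have := sum_noise_chi ε S y
  calc _ = F y * ∑ x, noiseWt ε y x * chi S x := by
        rw [Finset.mul_sum]
        exact Finset.sum_congr rfl fun x _ => by rw [noise_symm]; ring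
    _ = _ := by rw [this]; ring

lemma balanced_iff {n : ℕ} (f : (Fin n → Bool) → Bool) :
    BalancedFn f ↔ ∑ x, sg (f x) = 0 := by
  have h : ∑ x, sg (f x) = ((Finset.univ.filter fun x => f x = false).card : ℝ) -
      ((Finset.univ.filter fun x => f x = true).card : ℝ) := by
    rw [Finset.card_filter, Finset.card_filter]
    push_cast
    rw [← Finset.sum_sub_distrib]
    exact Finset.sum_congr rfl fun x _ => by cases f x <;> simp [sg]
  rw [h, sub_eq_zero, BalancedFn]
  norm_cast

/-- key norm bound -/
lemma norm_bound {ε : ℝ} (h0 : 0 < ε) (h1 : ε < 1/2) {n : ℕ} (f : (Fin n → Bool) → Bool)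
    (hf : BalancedFn f) :
    ∑ x, Uop ε (fun y => sg (f y)) x ^ 2 ≤ (1-2*ε)^2 * 2^n ∧
    ((1-2*ε)^2 * 2^n ≤ ∑ x, Uop ε (fun y => sg (f y)) x ^ 2 →
      ∃ i, ∃ σ : ℝ, (∀ x, sg (f x) = σ * sg (x i)) ∧ (σ = 1 ∨ σ = -1)) := by
  set F : (Fin n → Bool) → ℝ := fun y => sg (f y) with hF
  set ρ := 1 - 2*ε with hρ
  have hρ0 : 0 < ρ := by linarith
  have hρ1 : ρ < 1 := by linarith
  have hN : (0:ℝ) < 2^n := by positivity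
  have p1 := parseval (Uop ε F)
  have p2 := parseval F
  have hFs : ∑ x, F x ^ 2 = 2^n := by
    have : ∀ x, F x ^ 2 = 1 := fun x => by rw [sq]; exact sg_mul_self _
    simp [this]
  rw [hFs] at p2
  have hempty : cf F ∅ = 0 := by
    have := (balanced_iff f).1 hf
    simpa [cf, chi] using this
  simp only [cf_U] at p1
  have hterm : ∀ S, ((1 - 2*ε)^S.card * cf F S)^2 ≤ ρ^2 * cf F S ^ 2 := by
    intro S
    rw [← hρ]
    rcases S.eq_empty_or_nonempty with h | h
    · subst h; simp [hempty]
    · rw [mul_pow]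
      gcongr
      exact pow_le_of_le_one hρ0.le hρ1.le (Finset.card_ne_zero.2 h)
  have hle := Finset.sum_le_sum (fun S (_ : S ∈ (Finset.univ : Finset (Finset (Fin n)))) => hterm S)
  rw [← Finset.mul_sum, p2, p1] at hle
  refine ⟨by nlinarith, fun hge => ?_⟩
  have heq : ∑ S, ((1 - 2*ε)^S.card * cf F S)^2 = ∑ S, ρ^2 * cf F S ^ 2 := by
    rw [← Finset.mul_sum, p2, p1]
    apply le_antisymm hle
    nlinarith
  have hz := (Finset.sum_eq_sum_iff_of_le (fun S _ => hterm S)).1 heq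
  have hsingle : ∀ S, cf F S ≠ 0 → S.card = 1 := by
    intro S hS
    have h := hz S (Finset.mem_univ _)
    rw [← hρ, mul_pow] at h
    have h2 := mul_right_cancel₀ (pow_ne_zero 2 hS) h
    rw [← pow_mul] at h2
    have := (pow_right_injective₀ hρ0 hρ1.ne) h2
    omega
  have hex : ∃ S, cf F S ≠ 0 := by
    by_contra! hcon
    simp [hcon] at p2
  obtain ⟨S0, hS0⟩ := hex
  obtain ⟨i, rfl⟩ := Finset.card_eq_one.1 (hsingle S0 hS0)
  have hfl : ∀ x, 2^n * F x - 2^n * F (Function.update x i (!(x i))) = 2 * cf F {i} * sg (x i) := by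
    intro x
    rw [← inversion, ← inversion, ← Finset.sum_sub_distrib, Finset.sum_eq_single {i}]
    · simp only [chi, Finset.prod_singleton, Function.update_self]
      cases x i <;> simp [sg] <;> ring
    · intro S _ hS
      by_cases hc : cf F S = 0
      · simp [hc]
      · obtain ⟨j, rfl⟩ := Finset.card_eq_one.1 (hsingle S hc)
        have : j ≠ i := by rintro rfl; exact hS rfl
        simp [chi, Function.update_of_ne this]
    · simp
  have hdict : ∀ x, F x * sg (x i) = cf F {i} / 2^n ∧ (cf F {i} / 2^n = 1 ∨ cf F {i} / 2^n = -1) := by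
    intro x
    have h := hfl x
    simp only [hF] at h ⊢
    have hc : cf F {i} = 2^n * (cf F {i} / 2^n) := by field_simp
    simp only [hF] at hc hS0
    set c := cf (fun y => sg (f y)) {i} / 2^n
    have hc0 : c ≠ 0 := by
      rintro h; rw [h] at hc; simp at hc; exact hS0 hc
    rw [hc] at h
    have h' : sg (f x) - sg (f (Function.update x i (!(x i)))) = 2 * c * sg (x i) := by
      apply mul_left_cancel₀ hN.ne'
      linarith
    revert h'
    cases f x <;> cases f (Function.update x i (!(x i))) <;> cases x i <;> simp [sg, hc0] <;>
      intro h' <;> (first | (constructor <;> first | linarith | (left; linarith) | (right; linarith)))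
  refine ⟨i, cf F {i} / 2^n, fun x => ?_, (hdict fun _ => false).2⟩
  rw [← (hdict x).1, mul_assoc, sg_mul_self, mul_one]

lemma U_dict (ε : ℝ) {n : ℕ} (i : Fin n) (σ : ℝ) (x : Fin n → Bool) :
    Uop ε (fun y => σ * sg (y i)) x = (1-2*ε) * (σ * sg (x i)) := by
  have := sum_noise_chi ε {i} x
  simp only [chi, Finset.prod_singleton, Finset.card_singleton, pow_one] at this
  calc _ = σ * ∑ y, noiseWt ε x y * sg (y i) := by
        rw [Uop, Finset.mul_sum]
        exact Finset.sum_congr rfl fun y _ => by ring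
    _ = _ := by rw [this]; ring

lemma pair_bound {ε : ℝ} (h0 : 0 < ε) (h1 : ε < 1/2) {n : ℕ} (f g : (Fin n → Bool) → Bool)
    (hf : BalancedFn f) (hg : BalancedFn g) :
    ∑ x, Uop ε (fun y => sg (f y)) x * Uop ε (fun y => sg (g y)) x ≤ (1-2*ε)^2 * 2^n ∧
    ((1-2*ε)^2 * 2^n ≤ ∑ x, Uop ε (fun y => sg (f y)) x * Uop ε (fun y => sg (g y)) x →
      f = g ∧ ∃ i, ∃ σ : ℝ, (∀ x, sg (f x) = σ * sg (x i)) ∧ (σ = 1 ∨ σ = -1)) := by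
  obtain ⟨a1, a2⟩ := norm_bound h0 h1 f hf
  obtain ⟨b1, b2⟩ := norm_bound h0 h1 g hg
  set A := Uop ε (fun y => sg (f y)) with hA
  set B := Uop ε (fun y => sg (g y)) with hB
  have hsq : ∑ x, (A x - B x)^2 = ∑ x, A x^2 + ∑ x, B x^2 - 2 * ∑ x, A x * B x := by
    rw [Finset.mul_sum, ← Finset.sum_add_distrib, ← Finset.sum_sub_distrib]
    exact Finset.sum_congr rfl fun x _ => by ring
  have hnn : 0 ≤ ∑ x, (A x - B x)^2 := Finset.sum_nonneg fun x _ => sq_nonneg _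
  refine ⟨by linarith, fun h => ?_⟩
  obtain ⟨i, σ, hi, hσ⟩ := a2 (by linarith)
  obtain ⟨j, τ, hj, hτ⟩ := b2 (by linarith)
  refine ⟨?_, i, σ, hi, hσ⟩
  have hz : ∑ x, (A x - B x)^2 = 0 := by linarith
  rw [Finset.sum_eq_zero_iff_of_nonneg (fun x _ => sq_nonneg _)] at hz
  funext x
  have hx := hz x (Finset.mem_univ _)
  have hx : A x - B x = 0 := by simpa using hx
  simp only [hA, hB, hi, hj, U_dict] at hx
  rw [← hi, ← hj, ← mul_sub] at hx
  have hne : 1 - 2*ε ≠ 0 := by intro h; linarith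
  have := (mul_eq_zero.1 hx).resolve_left hne
  revert this
  cases f x <;> cases g x <;> simp [sg] <;> norm_num

lemma U_one (ε : ℝ) {n : ℕ} (x : Fin n → Bool) : ∑ y, noiseWt ε x y = 1 := by
  have := sum_noise_chi ε ∅ x
  simpa [chi] using this

lemma agree_eq (ε : ℝ) (n k : ℕ) (hk : 0 < k) (fs : Fin k → (Fin n → Bool) → Bool) :
    agreeProb ε n k fs = ((2:ℝ)^n)⁻¹ * ∑ x, ((∏ i, (1 + Uop ε (fun y => sg (fs i y)) x) / 2) +
      ∏ i, (1 - Uop ε (fun y => sg (fs i y)) x) / 2) := by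
  rw [agreeProb]
  congr 1
  refine Finset.sum_congr rfl fun x _ => ?_
  have e1 : ∀ i, (1 + Uop ε (fun y => sg (fs i y)) x) / 2 =
      ∑ y, noiseWt ε x y * (if fs i y = false then 1 else 0) := by
    intro i
    rw [← U_one ε x, Uop, ← Finset.sum_add_distrib, Finset.sum_div]
    exact Finset.sum_congr rfl fun y _ => by cases fs i y <;> simp [sg, U_one]
  have e2 : ∀ i, (1 - Uop ε (fun y => sg (fs i y)) x) / 2 =
      ∑ y, noiseWt ε x y * (if fs i y = true then 1 else 0) := by
    intro i
    rw [← U_one ε x, Uop, ← Finset.sum_sub_distrib, Finset.sum_div]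
    exact Finset.sum_congr rfl fun y _ => by cases fs i y <;> simp [sg, U_one]
  simp only [e1, e2]
  rw [Finset.prod_univ_sum, Finset.prod_univ_sum, Fintype.piFinset_univ, ← Finset.sum_add_distrib]
  refine Finset.sum_congr rfl fun ys _ => ?_
  rw [Finset.prod_mul_distrib, Finset.prod_mul_distrib, ← mul_add]
  congr 1
  rw [Finset.prod_ite_zero, Finset.prod_ite_zero]
  simp only [Finset.prod_const_one, Finset.mem_univ, true_imp_iff]
  by_cases h : ∀ i j : Fin k, fs i (ys i) = fs j (ys j)
  · rw [if_pos h]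
    have hc : ∀ i, fs i (ys i) = fs ⟨0, hk⟩ (ys ⟨0, hk⟩) := fun i => h _ _
    have : Nonempty (Fin k) := ⟨⟨0, hk⟩⟩
    simp only [hc]
    cases fs ⟨0, hk⟩ (ys ⟨0, hk⟩) <;> simp
  · rw [if_neg h, if_neg, if_neg, add_zero]
    · intro h'; exact h fun i j => by rw [h', h']
    · intro h'; exact h fun i j => by rw [h', h']

lemma dict_form {n : ℕ} (hn : 0 < n) (f : (Fin n → Bool) → Bool) :
    (∃ i, ∃ σ : ℝ, (∀ x, sg (f x) = σ * sg (x i)) ∧ (σ = 1 ∨ σ = -1)) ↔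
    ∃ (π : Equiv.Perm (Fin n)) (S : Finset (Fin n)), f = fun x => piS π S x ⟨0, hn⟩ := by
  constructor
  · rintro ⟨i, σ, h, rfl | rfl⟩
    · refine ⟨Equiv.swap ⟨0, hn⟩ i, Finset.univ, ?_⟩
      funext x
      have := h x
      simp only [piS, Finset.mem_univ, if_true, Equiv.swap_apply_left]
      revert this
      cases f x <;> cases x i <;> simp [sg] <;> norm_num
    · refine ⟨Equiv.swap ⟨0, hn⟩ i, ∅, ?_⟩
      funext x
      have := h x
      simp only [piS, Finset.notMem_empty, if_false, Equiv.swap_apply_left]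
      revert this
      cases f x <;> cases x i <;> simp [sg] <;> norm_num
  · rintro ⟨π, S, rfl⟩
    by_cases hS : (⟨0, hn⟩ : Fin n) ∈ S
    · exact ⟨π ⟨0, hn⟩, 1, fun x => by simp [piS, hS], Or.inl rfl⟩
    · exact ⟨π ⟨0, hn⟩, -1, fun x => by
        simp only [piS, hS, if_false]
        cases x (π ⟨0, hn⟩) <;> simp [sg], Or.inr rfl⟩

lemma dict_bal {n : ℕ} (f : (Fin n → Bool) → Bool)
    (h : ∃ i, ∃ σ : ℝ, (∀ x, sg (f x) = σ * sg (x i)) ∧ (σ = 1 ∨ σ = -1)) : BalancedFn f := by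
  obtain ⟨i, σ, h, -⟩ := h
  rw [balanced_iff]
  simp only [h]
  rw [← Finset.mul_sum]
  have h2 : ∑ x : Fin n → Bool, sg (x i) = 0 := by
    apply Finset.sum_involution (fun x _ => Function.update x i (!(x i)))
    · intro x _; simp only [Function.update_self]; cases x i <;> simp [sg]
    · intro x _ _ hx
      have := congrFun hx i
      simp at this
    · intro x _; simp
    · intro x _; simp
  rw [h2, mul_zero]

lemma dict_pair (ε : ℝ) {n : ℕ} (f : (Fin n → Bool) → Bool)
    (h : ∃ i, ∃ σ : ℝ, (∀ x, sg (f x) = σ * sg (x i)) ∧ (σ = 1 ∨ σ = -1)) :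
    ∑ x, Uop ε (fun y => sg (f y)) x * Uop ε (fun y => sg (f y)) x = (1-2*ε)^2 * 2^n := by
  obtain ⟨i, σ, h, -⟩ := h
  have : ∀ x, Uop ε (fun y => sg (f y)) x * Uop ε (fun y => sg (f y)) x = (1-2*ε)^2 := by
    intro x
    simp only [h, U_dict]
    rw [← h]
    linear_combination (1-2*ε)^2 * sg_mul_self (f x)
  simp [this, mul_comm]

lemma agree2 (ε : ℝ) (n : ℕ) (fs : Fin 2 → (Fin n → Bool) → Bool) :
    agreeProb ε n 2 fs = ((2:ℝ)^n)⁻¹ * ((2^n +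
      ∑ x, Uop ε (fun y => sg (fs 0 y)) x * Uop ε (fun y => sg (fs 1 y)) x) / 2) := by
  rw [agree_eq ε n 2 (by norm_num)]
  congr 1
  have : (2:ℝ)^n = ∑ x : Fin n → Bool, 1 := by simp
  rw [this, ← Finset.sum_add_distrib, Finset.sum_div]
  refine Finset.sum_congr rfl fun x _ => ?_
  rw [Fin.prod_univ_two, Fin.prod_univ_two]
  ring

lemma agree3 (ε : ℝ) (n : ℕ) (fs : Fin 3 → (Fin n → Bool) → Bool) :
    agreeProb ε n 3 fs = ((2:ℝ)^n)⁻¹ * ((2^n +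
      ∑ x, Uop ε (fun y => sg (fs 0 y)) x * Uop ε (fun y => sg (fs 1 y)) x +
      ∑ x, Uop ε (fun y => sg (fs 0 y)) x * Uop ε (fun y => sg (fs 2 y)) x +
      ∑ x, Uop ε (fun y => sg (fs 1 y)) x * Uop ε (fun y => sg (fs 2 y)) x) / 4) := by
  rw [agree_eq ε n 3 (by norm_num)]
  congr 1
  have : (2:ℝ)^n = ∑ x : Fin n → Bool, 1 := by simp
  rw [this, ← Finset.sum_add_distrib, ← Finset.sum_add_distrib, ← Finset.sum_add_distrib,
    Finset.sum_div]
  refine Finset.sum_congr rfl fun x _ => ?_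
  rw [Fin.prod_univ_three, Fin.prod_univ_three]
  ring

/-- For `k = 2` or `k = 3`, the unique best protocol of balanced functions, up to `π_S`,
for maximizing the agreement probability is all parties using the first-bit dictator. -/
theorem statement1 (k n : ℕ) (hk : k = 2 ∨ k = 3) (hn : 0 < n) (ε : ℝ) (hε₀ : 0 < ε)
    (hε₁ : ε < 1 / 2) :
    {fs : Fin k → (Fin n → Bool) → Bool |
        (∀ i, BalancedFn (fs i)) ∧
          ∀ gs : Fin k → (Fin n → Bool) → Bool, (∀ i, BalancedFn (gs i)) →
            agreeProb ε n k gs ≤ agreeProb ε n k fs} =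
      {fs | ∃ (π : Equiv.Perm (Fin n)) (S : Finset (Fin n)),
          fs = fun _ => fun x => piS π S x ⟨0, hn⟩} := by
  have hN : (0:ℝ) < ((2:ℝ)^n)⁻¹ := by positivity
  have hd : ∃ i, ∃ σ : ℝ, (∀ x, sg ((fun x : Fin n → Bool => x ⟨0, hn⟩) x) = σ * sg (x i)) ∧
      (σ = 1 ∨ σ = -1) := ⟨⟨0, hn⟩, 1, fun x => by simp, Or.inl rfl⟩
  have hdb := dict_bal _ hd
  have hdp := dict_pair ε _ hd
  ext fs
  simp only [Set.mem_setOf_eq]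
  rcases hk with rfl | rfl
  · constructor
    · rintro ⟨hb, hmax⟩
      have h := hmax (fun _ x => x ⟨0, hn⟩) (fun _ => hdb)
      rw [agree2, agree2, hdp] at h
      have h := le_of_mul_le_mul_left h hN
      obtain ⟨e, hi⟩ := (pair_bound hε₀ hε₁ _ _ (hb 0) (hb 1)).2 (by linarith)
      obtain ⟨π, S, hp⟩ := (dict_form hn _).1 hi
      refine ⟨π, S, ?_⟩
      rw [← hp]
      funext i
      fin_cases i
      · rfl
      · exact e.symm
    · rintro ⟨π, S, rfl⟩
      have hdict := (dict_form hn _).2 ⟨π, S, rfl⟩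
      refine ⟨fun _ => dict_bal _ hdict, fun gs hg => ?_⟩
      rw [agree2, agree2, dict_pair ε _ hdict]
      apply mul_le_mul_of_nonneg_left _ hN.le
      linarith [(pair_bound hε₀ hε₁ _ _ (hg 0) (hg 1)).1]
  · constructor
    · rintro ⟨hb, hmax⟩
      have h := hmax (fun _ x => x ⟨0, hn⟩) (fun _ => hdb)
      rw [agree3, agree3, hdp] at h
      have h := le_of_mul_le_mul_left h hN
      obtain ⟨b1, c1⟩ := pair_bound hε₀ hε₁ _ _ (hb 0) (hb 1)
      obtain ⟨b2, c2⟩ := pair_bound hε₀ hε₁ _ _ (hb 0) (hb 2)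
      obtain ⟨b3, c3⟩ := pair_bound hε₀ hε₁ _ _ (hb 1) (hb 2)
      obtain ⟨e, hi⟩ := c1 (by linarith)
      obtain ⟨e2, -⟩ := c2 (by linarith)
      obtain ⟨π, S, hp⟩ := (dict_form hn _).1 hi
      refine ⟨π, S, ?_⟩
      rw [← hp]
      funext i
      fin_cases i
      · rfl
      · exact e.symm
      · exact e2.symm
    · rintro ⟨π, S, rfl⟩
      have hdict := (dict_form hn _).2 ⟨π, S, rfl⟩
      refine ⟨fun _ => dict_bal _ hdict, fun gs hg => ?_⟩
      rw [agree3, agree3, dict_pair ε _ hdict]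
      apply mul_le_mul_of_nonneg_left _ hN.le
      linarith [(pair_bound hε₀ hε₁ _ _ (hg 0) (hg 1)).1,
        (pair_bound hε₀ hε₁ _ _ (hg 0) (hg 2)).1, (pair_bound hε₀ hε₁ _ _ (hg 1) (hg 2)).1]
end

section
/- Fix ε ∈ (0,1/2) and let f : {0,1}^n → {0,1} be monotone. Then, as a function of x ∈ {0,1}^n, p_1(f,x,ε) is maximized at x = 1⋯1 (the all-ones string), and p_0(f,x,ε) is maximized at x = 0⋯0 (the all-zeros string). -/
open Finset

/-- `f` is monotone (with respect to the coordinatewise order, `false ≤ true`). -/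
def MonotoneFn {n : ℕ} (f : (Fin n → Bool) → Bool) : Prop :=
  ∀ x y : Fin n → Bool, (∀ i, x i ≤ y i) → f x ≤ f y

/-- `p₁(f,x,ε)`: the probability that `f(y) = 1` where `y` is an `ε`-corruption of `x`. -/
noncomputable def pOne (ε : ℝ) {n : ℕ} (f : (Fin n → Bool) → Bool) (x : Fin n → Bool) : ℝ :=
  ∑ y : Fin n → Bool, noiseWt ε x y * (if f y = true then 1 else 0)

/-- `p₀(f,x,ε)`: the probability that `f(y) = 0` where `y` is an `ε`-corruption of `x`. -/
noncomputable def pZero (ε : ℝ) {n : ℕ} (f : (Fin n → Bool) → Bool) (x : Fin n → Bool) : ℝ :=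
  ∑ y : Fin n → Bool, noiseWt ε x y * (if f y = false then 1 else 0)

theorem noise_aux (ε : ℝ) (hε₀ : 0 < ε) (hε₁ : ε < 1 / 2) (b : Bool) : ∀ (n : ℕ)
    (g : (Fin n → Bool) → ℝ) (_ : ∀ y z : Fin n → Bool, (∀ i, z i = y i ∨ z i = b) → g y ≤ g z)
    (x : Fin n → Bool),
    ∑ y, noiseWt ε x y * g y ≤ ∑ y, noiseWt ε (fun _ => b) y * g y := by
  intro n
  induction n with
  | zero =>
    intro g _ x
    rw [Subsingleton.elim x (fun _ => b)]
  | succ n ih =>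
    intro g hg x
    have key : ∀ x : Fin (n+1) → Bool, ∑ y, noiseWt ε x y * g y =
        ∑ a : Bool, (if a = x 0 then 1 - ε else ε) *
          ∑ y : Fin n → Bool, noiseWt ε (fun i => x i.succ) y * g (Fin.cons a y) := by
      intro x
      rw [← (Fin.consEquiv (fun _ : Fin (n+1) => Bool)).sum_comp, Fintype.sum_prod_type]
      refine Finset.sum_congr rfl fun a _ => ?_
      rw [Finset.mul_sum]
      refine Finset.sum_congr rfl fun y _ => ?_
      simp [noiseWt, Fin.consEquiv, Fin.prod_univ_succ, mul_assoc]
    rw [key, key]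
    have h1 : ∀ a : Bool, ∑ y : Fin n → Bool, noiseWt ε (fun i => x i.succ) y * g (Fin.cons a y) ≤
        ∑ y : Fin n → Bool, noiseWt ε (fun _ => b) y * g (Fin.cons a y) := by
      intro a
      refine ih (fun y => g (Fin.cons a y)) ?_ _
      intro y z h
      refine hg _ _ fun i => ?_
      refine Fin.cases ?_ (fun i => ?_) i
      · simp
      · simpa using h i
    have h2 : ∑ y : Fin n → Bool, noiseWt ε (fun _ => b) y * g (Fin.cons (!b) y) ≤
        ∑ y : Fin n → Bool, noiseWt ε (fun _ => b) y * g (Fin.cons b y) := by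
      refine Finset.sum_le_sum fun y _ => mul_le_mul_of_nonneg_left ?_ ?_
      · refine hg _ _ fun i => ?_
        refine Fin.cases ?_ (fun i => ?_) i
        · simp
        · simp
      · unfold noiseWt
        refine Finset.prod_nonneg fun j _ => ?_
        split_ifs <;> linarith
    have ht := h1 true
    have hf := h1 false
    rw [Fintype.sum_bool, Fintype.sum_bool]
    generalize x 0 = c
    cases b <;> cases c <;> simp at h2 ⊢ <;> nlinarith

theorem statement8 (n : ℕ) (ε : ℝ) (hε₀ : 0 < ε) (hε₁ : ε < 1 / 2)
    (f : (Fin n → Bool) → Bool) (hf : MonotoneFn f) (x : Fin n → Bool) :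
    pOne ε f x ≤ pOne ε f (fun _ => true) ∧
      pZero ε f x ≤ pZero ε f (fun _ => false) := by
  constructor
  · refine noise_aux ε hε₀ hε₁ true n (fun y => if f y = true then 1 else 0) ?_ x
    intro y z h
    have := hf y z (fun i => by rcases h i with h | h <;> simp [h, Bool.le_true])
    revert this
    cases f y <;> cases f z <;> simp
  · refine noise_aux ε hε₀ hε₁ false n (fun y => if f y = false then 1 else 0) ?_ x
    intro y z h
    have := hf z y (fun i => by rcases h i with h | h <;> simp [h, Bool.false_le])
    revert this
    cases f y <;> cases f z <;> simp
end

section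
/- For every odd n ≥ 1 and every ε ∈ (0,1/2), there exists K = K(n,ε) such that for all k ≥ K, the unique best protocol up to π_S for maximizing 𝒫(f_1,…,f_k;ε) over protocols of balanced functions is f_1 = ⋯ = f_k = Maj_n. -/
open Finset

/-- The number of ones (`true` coordinates) in a string. -/
def countOnes {n : ℕ} (x : Fin n → Bool) : ℕ := ∑ i : Fin n, cond (x i) 1 0

/-- The majority function on `n` bits: `1` iff more than `n/2` of the bits are `1`. -/
def majn (n : ℕ) : (Fin n → Bool) → Bool := fun x => decide (n < 2 * countOnes x)


def trv {n : ℕ} (a y : Fin n → Bool) : Fin n → Bool := fun i => y i == a i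

def ngv {n : ℕ} (y : Fin n → Bool) : Fin n → Bool := fun i => !(y i)

def Mj {n : ℕ} (a : Fin n → Bool) : (Fin n → Bool) → Bool := fun y => majn n (trv a y)

noncomputable def Aw (ε : ℝ) {n : ℕ} (b : Bool) (f : (Fin n → Bool) → Bool) (x : Fin n → Bool) : ℝ :=
  ∑ y, noiseWt ε x y * (if f y = b then 1 else 0)

lemma trv_trv {n : ℕ} (a y : Fin n → Bool) : trv a (trv a y) = y := by
  funext i; simp only [trv]; cases y i <;> cases a i <;> rfl

lemma ngv_ngv {n : ℕ} (y : Fin n → Bool) : ngv (ngv y) = y := by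
  funext i; simp [ngv]

lemma trv_ngv {n : ℕ} (a y : Fin n → Bool) : trv a (ngv y) = ngv (trv a y) := by
  funext i; simp only [trv, ngv]; cases y i <;> cases a i <;> rfl

lemma trv_ngv' {n : ℕ} (a y : Fin n → Bool) : trv (ngv a) y = ngv (trv a y) := by
  funext i; simp only [trv, ngv]; cases y i <;> cases a i <;> rfl

lemma trv_self {n : ℕ} (a : Fin n → Bool) : trv a a = fun _ => true := by
  funext i; simp [trv]

def trvE {n : ℕ} (a : Fin n → Bool) : (Fin n → Bool) ≃ (Fin n → Bool) :=
  ⟨trv a, trv a, trv_trv a, trv_trv a⟩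

def ngvE {n : ℕ} : (Fin n → Bool) ≃ (Fin n → Bool) :=
  ⟨ngv, ngv, ngv_ngv, ngv_ngv⟩

lemma noiseWt_trv (ε : ℝ) {n : ℕ} (a x y : Fin n → Bool) :
    noiseWt ε (trv a x) (trv a y) = noiseWt ε x y := by
  unfold noiseWt
  refine Finset.prod_congr rfl fun i _ => ?_
  have h : (trv a y i = trv a x i) ↔ (y i = x i) := by
    simp only [trv]
    generalize y i = u
    generalize x i = v
    generalize a i = w
    revert u v w; decide
  simp only [h]

lemma countOnes_ngv {n : ℕ} (y : Fin n → Bool) : countOnes (ngv y) + countOnes y = n := by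
  unfold countOnes ngv
  rw [← Finset.sum_add_distrib]
  have : ∀ i ∈ (Finset.univ : Finset (Fin n)), ((cond (!(y i)) 1 0 : ℕ) + cond (y i) 1 0) = 1 := by
    intro i _; cases y i <;> rfl
  rw [Finset.sum_congr rfl this]; simp

lemma majn_ngv {n : ℕ} (hodd : Odd n) (y : Fin n → Bool) : majn n (ngv y) = !(majn n y) := by
  have h := countOnes_ngv y
  obtain ⟨m, hm⟩ := hodd
  unfold majn
  by_cases h1 : n < 2 * countOnes y
  · have : ¬ n < 2 * countOnes (ngv y) := by omega
    simp [h1, this]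
  · have : n < 2 * countOnes (ngv y) := by omega
    simp [h1, this]

lemma Mj_ngv {n : ℕ} (hodd : Odd n) (a y : Fin n → Bool) : Mj (ngv a) y = !(Mj a y) := by
  unfold Mj; rw [trv_ngv', majn_ngv hodd]

lemma Mj_balanced {n : ℕ} (hodd : Odd n) (a : Fin n → Bool) : BalancedFn (Mj a) := by
  unfold BalancedFn
  refine Finset.card_equiv ngvE fun y => ?_
  have h : Mj a (ngvE y) = !(Mj a y) := by
    show majn n (trv a (ngv y)) = _
    rw [trv_ngv, majn_ngv hodd]; rfl
  rw [Finset.mem_filter, Finset.mem_filter, h]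
  simp

lemma Aw_Mj (ε : ℝ) {n : ℕ} (b : Bool) (a x : Fin n → Bool) :
    Aw ε b (Mj a) x = Aw ε b (majn n) (trv a x) := by
  unfold Aw
  refine Fintype.sum_equiv (trvE a) _ _ fun y => ?_
  show _ = noiseWt ε (trv a x) (trv a y) * (if majn n (trv a y) = b then 1 else 0)
  rw [noiseWt_trv]; rfl

lemma Aw_false (ε : ℝ) {n : ℕ} (f : (Fin n → Bool) → Bool) (x : Fin n → Bool) :
    Aw ε false f x = Aw ε true (fun y => !(f y)) x := by
  unfold Aw; simp

lemma noiseWt_pos {ε : ℝ} (h0 : 0 < ε) (h1 : ε < 1 / 2) {n : ℕ} (x y : Fin n → Bool) :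
    0 < noiseWt ε x y := by
  unfold noiseWt
  refine Finset.prod_pos fun i _ => ?_
  split_ifs <;> linarith

lemma Aw_nonneg {ε : ℝ} (h0 : 0 < ε) (h1 : ε < 1 / 2) {n : ℕ} (b : Bool)
    (f : (Fin n → Bool) → Bool) (x : Fin n → Bool) : 0 ≤ Aw ε b f x := by
  unfold Aw
  refine Finset.sum_nonneg fun y _ => mul_nonneg (noiseWt_pos h0 h1 x y).le ?_
  split_ifs <;> norm_num

lemma noiseWt_eq (ε : ℝ) {n : ℕ} (x y : Fin n → Bool) :
    noiseWt ε x y = (1 - ε) ^ countOnes (trv x y) * ε ^ countOnes (ngv (trv x y)) := by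
  unfold noiseWt countOnes
  rw [← Finset.prod_pow_eq_pow_sum, ← Finset.prod_pow_eq_pow_sum, ← Finset.prod_mul_distrib]
  refine Finset.prod_congr rfl fun i _ => ?_
  simp only [trv, ngv]; cases y i <;> cases x i <;> simp

lemma exists_thr {ε : ℝ} (h0 : 0 < ε) (h1 : ε < 1 / 2) {n : ℕ} (hodd : Odd n) :
    ∃ c : ℝ, ∀ x y : Fin n → Bool, (Mj x y = true → c < noiseWt ε x y) ∧
      (Mj x y = false → noiseWt ε x y < c) := by
  obtain ⟨m, hm⟩ := hodd
  have hp : 0 < ε ^ m * (1 - ε) ^ m := by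
    have : 0 < 1 - ε := by linarith
    positivity
  have e1 : 0 < 1 - ε := by linarith
  refine ⟨ε ^ m * (1 - ε) ^ m * (1 / 2), fun x y => ?_⟩
  rw [noiseWt_eq]
  have hc := countOnes_ngv (trv x y)
  simp only [Mj, majn, decide_eq_true_eq, decide_eq_false_iff_not]
  generalize countOnes (trv x y) = u at *
  generalize countOnes (ngv (trv x y)) = v at *
  constructor
  · intro hu
    obtain ⟨d, rfl⟩ : ∃ d, m = v + d := ⟨m - v, by omega⟩
    obtain rfl : u = v + d + d + 1 := by omega
    have : ε ^ d ≤ (1 - ε) ^ d := pow_le_pow_left₀ h0.le (by linarith) d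
    calc ε ^ (v + d) * (1 - ε) ^ (v + d) * (1 / 2)
        = ε ^ v * (1 - ε) ^ (v + d) * ε ^ d * (1 / 2) := by ring
      _ ≤ ε ^ v * (1 - ε) ^ (v + d) * (1 - ε) ^ d * (1 / 2) := by gcongr
      _ < ε ^ v * (1 - ε) ^ (v + d) * (1 - ε) ^ d * (1 - ε) := by
          gcongr; linarith
      _ = _ := by ring
  · intro hu
    obtain ⟨d, rfl⟩ : ∃ d, m = u + d := ⟨m - u, by omega⟩
    obtain rfl : v = u + d + d + 1 := by omega
    have : ε ^ d ≤ (1 - ε) ^ d := pow_le_pow_left₀ h0.le (by linarith) d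
    calc (1 - ε) ^ u * ε ^ (u + d + d + 1)
        = ε ^ (u + d) * (1 - ε) ^ u * ε ^ d * ε := by ring
      _ ≤ ε ^ (u + d) * (1 - ε) ^ u * (1 - ε) ^ d * ε := by gcongr
      _ < ε ^ (u + d) * (1 - ε) ^ u * (1 - ε) ^ d * (1 / 2) := by
          gcongr
      _ = _ := by ring

lemma balanced_card {n : ℕ} {f : (Fin n → Bool) → Bool} (hf : BalancedFn f) :
    2 * ∑ y, (if f y = true then (1 : ℝ) else 0) = 2 ^ n := by
  have h : (Finset.univ.filter fun x : Fin n → Bool => f x = true).card +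
    (Finset.univ.filter fun x : Fin n → Bool => ¬ f x = true).card = 2 ^ n := by
    rw [Finset.card_filter_add_card_filter_not]; simp
  unfold BalancedFn at hf
  simp only [Bool.not_eq_true] at h
  rw [hf] at h
  rw [Finset.sum_boole]
  have h2 : (((Finset.univ.filter fun x : Fin n → Bool => f x = true).card +
    (Finset.univ.filter fun x : Fin n → Bool => f x = true).card : ℕ) : ℝ) = ((2 ^ n : ℕ) : ℝ) := by
    rw [h]
  push_cast at h2
  linarith

lemma Aw_strict {ε : ℝ} (h0 : 0 < ε) (h1 : ε < 1 / 2) {n : ℕ} (hodd : Odd n)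
    {f : (Fin n → Bool) → Bool} (hf : BalancedFn f) (x : Fin n → Bool) (hne : f ≠ Mj x) :
    Aw ε true f x < Aw ε true (Mj x) x := by
  obtain ⟨c, hc⟩ := exists_thr h0 h1 hodd
  have e1 := balanced_card hf
  have e2 := balanced_card (Mj_balanced hodd x)
  have key : ∑ y, (noiseWt ε x y - c) * (if f y = true then 1 else 0) <
      ∑ y, (noiseWt ε x y - c) * (if Mj x y = true then 1 else 0) := by
    obtain ⟨y, hy⟩ := Function.ne_iff.1 hne
    refine Finset.sum_lt_sum (fun z _ => ?_) ⟨y, Finset.mem_univ _, ?_⟩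
    · have h3 := hc x z
      cases h4 : Mj x z <;> cases h5 : f z <;> simp [h4] at h3 ⊢ <;> linarith
    · have h3 := hc x y
      cases h4 : Mj x y <;> cases h5 : f y <;> simp [h4, h5] at h3 hy ⊢ <;> linarith
  simp only [sub_mul, Finset.sum_sub_distrib, ← Finset.mul_sum] at key
  have e3 : ∑ y, (if f y = true then (1 : ℝ) else 0) = ∑ y, (if Mj x y = true then (1 : ℝ) else 0) := by
    linarith
  rw [e3] at key
  unfold Aw
  linarith

lemma exists_r {ε : ℝ} (h0 : 0 < ε) (h1 : ε < 1 / 2) {n : ℕ} (hodd : Odd n) :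
    ∃ p r : ℝ, 0 < p ∧ 0 ≤ r ∧ r < 1 ∧ (∀ x : Fin n → Bool, Aw ε true (Mj x) x = p) ∧
      ∀ (f : (Fin n → Bool) → Bool) (x : Fin n → Bool), BalancedFn f → f ≠ Mj x →
        Aw ε true f x ≤ p * r := by
  set p := Aw ε true (majn n) (fun _ => true) with hp
  have hpx : ∀ x : Fin n → Bool, Aw ε true (Mj x) x = p := by
    intro x; rw [Aw_Mj, trv_self]
  have ppos : 0 < p := by
    have hb := Mj_balanced hodd (ngv (fun _ : Fin n => true))
    refine lt_of_le_of_lt (Aw_nonneg h0 h1 true _ (fun _ => true)) ((Aw_strict h0 h1 hodd hb (fun _ => true) ?_).trans_eq (hpx _))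
    intro h
    have := congrFun h (fun _ => true)
    rw [Mj_ngv hodd] at this
    cases h : Mj (fun _ : Fin n => true) (fun _ => true) <;> simp [h] at this
  obtain ⟨q, hq0, hqp, hq⟩ : ∃ q, 0 ≤ q ∧ q < p ∧ ∀ (f : (Fin n → Bool) → Bool) (x : Fin n → Bool),
      BalancedFn f → f ≠ Mj x → Aw ε true f x ≤ q := by
    classical
    let F : ((Fin n → Bool) → Bool) × (Fin n → Bool) → ℝ := fun t =>
      if BalancedFn t.1 ∧ t.1 ≠ Mj t.2 then Aw ε true t.1 t.2 else 0
    obtain ⟨t, ht⟩ := Finite.exists_max F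
    refine ⟨F t, ?_, ?_, fun f x hf hne => ?_⟩
    · simp only [F]; split_ifs
      · exact Aw_nonneg h0 h1 _ _ _
      · exact le_rfl
    · simp only [F]; split_ifs with h
      · exact (Aw_strict h0 h1 hodd h.1 _ h.2).trans_eq (hpx _)
      · exact ppos
    · have := ht (f, x)
      simp only [F, hf, true_and] at this
      rwa [if_pos hne] at this
  refine ⟨p, q / p, ppos, by positivity, (div_lt_one ppos).2 hqp, hpx, fun f x hf hne => ?_⟩
  rw [mul_div_cancel₀ _ ppos.ne']
  exact hq f x hf hne

lemma countOnes_mono {n : ℕ} (y z : Fin n → Bool) (h : ∀ i, y i = true → z i = true) :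
    countOnes y ≤ countOnes z := by
  unfold countOnes
  refine Finset.sum_le_sum fun i _ => ?_
  have := h i
  cases h1 : y i <;> cases h2 : z i <;> simp_all

lemma countOnes_mem {n : ℕ} (T : Finset (Fin n)) : countOnes (fun i => decide (i ∈ T)) = T.card := by
  unfold countOnes
  simp [Bool.cond_decide]

lemma Mj_inj {n : ℕ} (hodd : Odd n) : Function.Injective (Mj (n := n)) := by
  intro a b hab
  by_contra hne
  obtain ⟨j, hj⟩ := Function.ne_iff.1 hne
  obtain ⟨m, hm⟩ := hodd
  obtain ⟨T, hT, hTc⟩ := Finset.exists_subset_card_eq (s := (Finset.univ.erase j)) (n := m) (by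
    rw [Finset.card_erase_of_mem (Finset.mem_univ _)]; simp; omega)
  have hjT : j ∉ T := fun h => by simpa using hT h
  let y := trv a (fun i => decide (i ∈ insert j T))
  let z := trv a (fun i => decide (i ∈ T))
  have hy : Mj a y = true := by
    simp only [Mj, y, trv_trv, majn, countOnes_mem, Finset.card_insert_of_notMem hjT, decide_eq_true_eq]
    omega
  have hz : Mj a z = false := by
    simp only [Mj, z, trv_trv, majn, countOnes_mem, decide_eq_false_iff_not]
    omega
  have hle : countOnes (trv b y) ≤ countOnes (trv b z) := by
    refine countOnes_mono _ _ fun i => ?_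
    by_cases hij : i = j
    · subst hij
      simp only [y, z, trv]
      cases h1 : a i <;> cases h2 : b i <;> simp_all
    · simp only [y, z, trv, Finset.mem_insert, hij, false_or, imp_self]
  rw [hab] at hy hz
  simp only [Mj, majn, decide_eq_true_eq, decide_eq_false_iff_not] at hy hz
  omega

lemma agreeProb_eq (ε : ℝ) (n k : ℕ) (hk : 0 < k) (fs : Fin k → (Fin n → Bool) → Bool) :
    agreeProb ε n k fs = ((2 : ℝ) ^ n)⁻¹ *
      (∑ x, ∏ i, Aw ε true (fs i) x + ∑ x, ∏ i, Aw ε false (fs i) x) := by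
  unfold agreeProb Aw
  congr 1
  rw [← Finset.sum_add_distrib]
  refine Finset.sum_congr rfl fun x _ => ?_
  rw [Finset.prod_univ_sum, Finset.prod_univ_sum, Fintype.piFinset_univ, ← Finset.sum_add_distrib]
  refine Finset.sum_congr rfl fun ys _ => ?_
  rw [Finset.prod_mul_distrib, Finset.prod_mul_distrib, ← mul_add]
  congr 1
  rw [Finset.prod_ite_zero, Finset.prod_ite_zero]
  simp only [Finset.mem_univ, true_imp_iff, Finset.prod_const_one]
  let i0 : Fin k := ⟨0, hk⟩
  by_cases h : ∀ i j, fs i (ys i) = fs j (ys j)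
  · rw [if_pos h]
    cases h0 : fs i0 (ys i0)
    · have h2 : ∀ i, fs i (ys i) = false := fun i => (h i i0).trans h0
      have h1 : ¬ ∀ i, fs i (ys i) = true := fun h' => by simpa [h0] using h' i0
      rw [if_neg h1, if_pos h2]; norm_num
    · have h2 : ∀ i, fs i (ys i) = true := fun i => (h i i0).trans h0
      have h1 : ¬ ∀ i, fs i (ys i) = false := fun h' => by simpa [h0] using h' i0
      rw [if_neg h1, if_pos h2]; norm_num
  · rw [if_neg h, if_neg, if_neg]
    · norm_num
    · exact fun h' => h fun i j => (h' i).trans (h' j).symm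
    · exact fun h' => h fun i j => (h' i).trans (h' j).symm

lemma agreeProb_Mj (ε : ℝ) (n k : ℕ) (hk : 0 < k) (a : Fin n → Bool) :
    agreeProb ε n k (fun _ => Mj a) = agreeProb ε n k (fun _ => majn n) := by
  rw [agreeProb_eq _ _ _ hk, agreeProb_eq _ _ _ hk]
  congr 2
  · refine Fintype.sum_equiv (trvE a) _ _ fun x => ?_
    simp [Aw_Mj, trvE]
  · refine Fintype.sum_equiv (trvE a) _ _ fun x => ?_
    simp [Aw_Mj, trvE]

lemma balanced_not {n : ℕ} {f : (Fin n → Bool) → Bool} (hf : BalancedFn f) :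
    BalancedFn (fun y => !(f y)) := by
  unfold BalancedFn at *
  simpa using hf.symm

lemma Mj_eq_piS {n : ℕ} (π : Equiv.Perm (Fin n)) (S : Finset (Fin n)) :
    (fun x => majn n (piS π S x)) = Mj (fun i => decide (π.symm i ∈ S)) := by
  funext x
  unfold Mj majn
  have : countOnes (piS π S x) = countOnes (trv (fun i => decide (π.symm i ∈ S)) x) := by
    unfold countOnes
    refine Fintype.sum_equiv π _ _ fun i => ?_
    simp only [piS, trv, Equiv.symm_apply_apply]
    by_cases h : i ∈ S <;> simp [h]
  rw [this]

lemma agree_upper {ε : ℝ} (h0 : 0 < ε) (h1 : ε < 1 / 2) {n : ℕ} (hodd : Odd n) :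
    ∃ K : ℕ, ∀ k, K ≤ k → 0 < k ∧ ∀ gs : Fin k → (Fin n → Bool) → Bool, (∀ i, BalancedFn (gs i)) →
      (¬ ∃ a, gs = fun _ => Mj a) → agreeProb ε n k gs < agreeProb ε n k (fun _ => majn n) := by
  classical
  obtain ⟨p, r, ppos, r0, r1, hpx, hr⟩ := exists_r h0 h1 hodd
  obtain ⟨N, hN⟩ := exists_pow_lt_of_lt_one (show 0 < (1 - r) / 2 ^ n by
    have : 0 < 1 - r := by linarith
    positivity) r1
  rw [lt_div_iff₀ (by positivity)] at hN
  refine ⟨2 * N + 1, fun k hk => ⟨by omega, fun gs hgs hne => ?_⟩⟩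
  have hk0 : 0 < k := by omega
  let a0 : Fin n → Bool := fun _ => true
  rw [← agreeProb_Mj ε n k hk0 a0, agreeProb_eq _ _ _ hk0, agreeProb_eq _ _ _ hk0]
  refine mul_lt_mul_of_pos_left ?_ (by positivity)
  -- lower bound
  have low1 : p ^ k ≤ ∑ x, ∏ i : Fin k, Aw ε true (Mj a0) x := by
    calc p ^ k = ∏ i : Fin k, Aw ε true (Mj a0) a0 := by rw [hpx]; simp
      _ ≤ _ := Finset.single_le_sum (f := fun x => ∏ i : Fin k, Aw ε true (Mj a0) x)
        (fun x _ => Finset.prod_nonneg fun i _ => Aw_nonneg h0 h1 _ _ _) (Finset.mem_univ a0)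
  have low2 : p ^ k ≤ ∑ x, ∏ i : Fin k, Aw ε false (Mj a0) x := by
    have e : Aw ε false (Mj a0) (ngv a0) = p := by
      rw [Aw_false, ← hpx (ngv a0)]
      congr 1; funext y; rw [Mj_ngv hodd]
    calc p ^ k = ∏ i : Fin k, Aw ε false (Mj a0) (ngv a0) := by rw [e]; simp
      _ ≤ _ := Finset.single_le_sum (f := fun x => ∏ i : Fin k, Aw ε false (Mj a0) x)
        (fun x _ => Finset.prod_nonneg fun i _ => Aw_nonneg h0 h1 _ _ _) (Finset.mem_univ (ngv a0))
  -- upper bound for an arbitrary protocol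
  have up : ∀ fs : Fin k → (Fin n → Bool) → Bool, (∀ i, BalancedFn (fs i)) →
      (¬ ∃ a, fs = fun _ => Mj a) → ∑ x, ∏ i, Aw ε true (fs i) x < p ^ k := by
    intro fs hfs hnc
    let c : (Fin n → Bool) → ℕ := fun x => (Finset.univ.filter fun i => fs i = Mj x).card
    let d : (Fin n → Bool) → ℕ := fun x => (Finset.univ.filter fun i => ¬ fs i = Mj x).card
    have hcd : ∀ x, c x + d x = k := fun x => by
      simp only [c, d]; rw [Finset.card_filter_add_card_filter_not]; simp
    have hd1 : ∀ x, 1 ≤ d x := by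
      intro x
      by_contra h
      have : d x = 0 := by omega
      simp only [d, Finset.card_eq_zero, Finset.filter_eq_empty_iff, not_not] at this
      exact hnc ⟨x, funext fun i => this (Finset.mem_univ i)⟩
    have hcc : ∀ x y, x ≠ y → c x + c y ≤ k := by
      intro x y hxy
      simp only [c]
      rw [← Finset.card_union_of_disjoint]
      · exact (Finset.card_le_univ _).trans (by simp)
      · rw [Finset.disjoint_filter]
        intro i _ h2 h3
        exact hxy (Mj_inj hodd (h2.symm.trans h3))
    have hprod : ∀ x, ∏ i, Aw ε true (fs i) x ≤ p ^ k * r ^ d x := by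
      intro x
      calc ∏ i, Aw ε true (fs i) x ≤ ∏ i, (if fs i = Mj x then p else p * r) := by
            refine Finset.prod_le_prod (fun i _ => Aw_nonneg h0 h1 _ _ _) fun i _ => ?_
            split_ifs with h
            · rw [h, hpx]
            · exact hr _ _ (hfs i) h
        _ = p ^ c x * (p * r) ^ d x := by
            rw [Finset.prod_ite, Finset.prod_const, Finset.prod_const]
        _ = p ^ k * r ^ d x := by rw [mul_pow, ← mul_assoc, ← pow_add, hcd]
    obtain ⟨a, ha⟩ := Finite.exists_max c
    calc ∑ x, ∏ i, Aw ε true (fs i) x ≤ ∑ x, p ^ k * r ^ d x := Finset.sum_le_sum fun x _ => hprod x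
      _ ≤ ∑ x, p ^ k * ((if x = a then r else 0) + r ^ N) := by
          refine Finset.sum_le_sum fun x _ => mul_le_mul_of_nonneg_left ?_ (by positivity)
          split_ifs with h
          · have := pow_le_pow_of_le_one r0 r1.le (hd1 x)
            have : 0 ≤ r ^ N := by positivity
            linarith
          · rw [zero_add]
            refine pow_le_pow_of_le_one r0 r1.le ?_
            have := hcc x a h
            have := ha x
            have := hcd x
            omega
      _ = p ^ k * (r + r ^ N * 2 ^ n) := by
          rw [← Finset.mul_sum, Finset.sum_add_distrib]
          congr 1
          rw [Finset.sum_ite_eq' Finset.univ a, if_pos (Finset.mem_univ _), Finset.sum_const]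
          simp; ring
      _ < p ^ k * 1 := mul_lt_mul_of_pos_left (by linarith) (by positivity)
      _ = p ^ k := mul_one _
  have u1 := up gs hgs hne
  have u2 := up (fun i y => !(gs i y)) (fun i => balanced_not (hgs i)) (by
    rintro ⟨a, ha⟩
    refine hne ⟨ngv a, ?_⟩
    funext i y
    have := congrFun (congrFun ha i) y
    rw [Mj_ngv hodd, ← this, Bool.not_not])
  simp only [← Aw_false] at u2
  linarith

/-- For odd `n` and fixed `ε`, for all large enough `k` the unique best protocol of
balanced functions, up to `π_S`, is all parties using `Maj_n`. -/
theorem statement10 (n : ℕ) (hn : 0 < n) (hodd : Odd n) (ε : ℝ) (hε₀ : 0 < ε)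
    (hε₁ : ε < 1 / 2) :
    ∃ K : ℕ, ∀ k : ℕ, K ≤ k →
      {fs : Fin k → (Fin n → Bool) → Bool |
          (∀ i, BalancedFn (fs i)) ∧
            ∀ gs : Fin k → (Fin n → Bool) → Bool, (∀ i, BalancedFn (gs i)) →
              agreeProb ε n k gs ≤ agreeProb ε n k fs} =
        {fs | ∃ (π : Equiv.Perm (Fin n)) (S : Finset (Fin n)),
            fs = fun _ => fun x => majn n (piS π S x)} := by
  obtain ⟨K, hK⟩ := agree_upper hε₀ hε₁ hodd
  refine ⟨K, fun k hk => ?_⟩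
  obtain ⟨hk0, hup⟩ := hK k hk
  apply Set.ext
  intro fs
  constructor
  · rintro ⟨hb, hmax⟩
    by_contra hne
    have h1 : ¬ ∃ a, fs = fun _ => Mj a := by
      rintro ⟨a, ha⟩
      refine hne ⟨1, Finset.univ.filter fun i => a i = true, ?_⟩
      have e : a = fun i => decide ((1 : Equiv.Perm (Fin n)).symm i ∈
          Finset.univ.filter fun i => a i = true) := by
        funext j
        simp only [Finset.mem_filter, Finset.mem_univ, true_and, Bool.decide_eq_true]
        rfl
      have e2 := Mj_eq_piS (1 : Equiv.Perm (Fin n)) (Finset.univ.filter fun i => a i = true)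
      rw [← e] at e2
      rw [ha, e2]
    have h2 := hup fs hb h1
    rw [← agreeProb_Mj ε n k hk0 (fun _ => true)] at h2
    exact absurd (hmax (fun _ => Mj fun _ => true) fun _ => Mj_balanced hodd _) (not_le.2 h2)
  · rintro ⟨π, S, hfs⟩
    rw [Mj_eq_piS] at hfs
    subst hfs
    refine ⟨fun _ => Mj_balanced hodd _, fun gs hgs => ?_⟩
    rw [agreeProb_Mj _ _ _ hk0]
    by_cases h : ∃ a, gs = fun _ => Mj a
    · obtain ⟨a, rfl⟩ := h
      rw [agreeProb_Mj _ _ _ hk0]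
    · exact (hup gs hgs h).le
end

section
/- With n = 5, k = 10, and ε = 0.26, the majority-of-three protocol beats both the one-bit and majority-of-five protocols: 𝒫_{10}(Maj_3; 0.26) > 𝒫_{10}(Maj_1; 0.26) and 𝒫_{10}(Maj_3; 0.26) > 𝒫_{10}(Maj_5; 0.26). In particular, there exist k, ε, an odd n, and an odd r with 1 < r < n such that Maj_r is a strictly better protocol than both Maj_1 and Maj_n. -/
open Finset

/-- Majority of the first `r` bits (out of `n`). -/
def majFirst (n r : ℕ) : (Fin n → Bool) → Bool :=
  fun x => decide (r < 2 * ∑ i ∈ Finset.univ.filter (fun i : Fin n => (i : ℕ) < r),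
    cond (x i) 1 0)

def natWt (x y : Fin 5 → Bool) : ℕ := ∏ j : Fin 5, if y j = x j then 37 else 13

def natPart (f : (Fin 5 → Bool) → Bool) (b : Bool) (x : Fin 5 → Bool) : ℕ :=
  ∑ y : Fin 5 → Bool, natWt x y * (if f y = b then 1 else 0)

def natAgree (f : (Fin 5 → Bool) → Bool) : ℕ :=
  ∑ x : Fin 5 → Bool, (natPart f true x ^ 10 + natPart f false x ^ 10)

lemma noiseWt_eq_s17 (x y : Fin 5 → Bool) : noiseWt 0.26 x y = (natWt x y : ℝ) / 50 ^ 5 := by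
  have h : ∀ j : Fin 5, (if y j = x j then (1 - 0.26 : ℝ) else 0.26) =
      (((if y j = x j then 37 else 13 : ℕ)) : ℝ) / 50 := by
    intro j
    split_ifs <;> norm_num
  unfold noiseWt natWt
  rw [Finset.prod_congr rfl (fun j _ => h j), Finset.prod_div_distrib]
  simp

lemma ind_eq (f : (Fin 5 → Bool) → Bool) (ys : Fin 10 → Fin 5 → Bool) :
    (if ∀ i j : Fin 10, f (ys i) = f (ys j) then (1 : ℝ) else 0) =
      (∏ i, if f (ys i) = true then (1 : ℝ) else 0) +
      (∏ i, if f (ys i) = false then (1 : ℝ) else 0) := by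
  rw [Finset.prod_ite_zero, Finset.prod_ite_zero]
  simp only [Finset.mem_univ, true_implies, Finset.prod_const_one]
  by_cases h : ∀ i j : Fin 10, f (ys i) = f (ys j)
  · rw [if_pos h]
    cases h0 : f (ys 0)
    · have : ∀ i, f (ys i) = false := fun i => (h i 0).trans h0
      simp [this]
    · have : ∀ i, f (ys i) = true := fun i => (h i 0).trans h0
      simp [this]
  · rw [if_neg h, if_neg, if_neg]
    · simp
    · exact fun h' => h fun i j => (h' i).trans (h' j).symm
    · exact fun h' => h fun i j => (h' i).trans (h' j).symm

lemma sum_part (f : (Fin 5 → Bool) → Bool) (b : Bool) (x : Fin 5 → Bool) :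
    ∑ ys : Fin 10 → Fin 5 → Bool, (∏ i, noiseWt 0.26 x (ys i)) *
      (∏ i, if f (ys i) = b then (1 : ℝ) else 0) = ((natPart f b x : ℝ) / 50 ^ 5) ^ 10 := by
  have h : (natPart f b x : ℝ) / 50 ^ 5 =
      ∑ y : Fin 5 → Bool, noiseWt 0.26 x y * (if f y = b then (1 : ℝ) else 0) := by
    unfold natPart
    push_cast
    rw [Finset.sum_div]
    refine Finset.sum_congr rfl fun y _ => ?_
    rw [noiseWt_eq_s17]
    ring
  rw [h, Fintype.sum_pow]
  refine Finset.sum_congr rfl fun ys _ => ?_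
  rw [Finset.prod_mul_distrib]

lemma agree_eq_s17 (f : (Fin 5 → Bool) → Bool) :
    agreeProb 0.26 5 10 (fun _ => f) = (2 ^ 5 : ℝ)⁻¹ * ((natAgree f : ℝ) / (50 ^ 5) ^ 10) := by
  unfold agreeProb natAgree
  congr 1
  push_cast
  rw [Finset.sum_div]
  refine Finset.sum_congr rfl fun x _ => ?_
  simp only [ind_eq, mul_add, Finset.sum_add_distrib]
  rw [sum_part, sum_part, div_pow, div_pow, add_div]

lemma agree_lt (f g : (Fin 5 → Bool) → Bool) (h : natAgree f < natAgree g) :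
    agreeProb 0.26 5 10 (fun _ => f) < agreeProb 0.26 5 10 (fun _ => g) := by
  rw [agree_eq_s17, agree_eq_s17]
  have h' : (natAgree f : ℝ) < natAgree g := by exact_mod_cast h
  gcongr

lemma lt13 : natAgree (majFirst 5 1) < natAgree (majFirst 5 3) := by decide +kernel

lemma lt53 : natAgree (majFirst 5 5) < natAgree (majFirst 5 3) := by decide +kernel

/-- With `n = 5`, `k = 10`, `ε = 0.26`, majority of three beats both the one-bit protocol
and majority of five; in particular, some intermediate majority beats `Maj_1` and `Maj_n`. -/
theorem statement17 :
    (agreeProb 0.26 5 10 (fun _ => majFirst 5 1) <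
        agreeProb 0.26 5 10 (fun _ => majFirst 5 3) ∧
      agreeProb 0.26 5 10 (fun _ => majFirst 5 5) <
        agreeProb 0.26 5 10 (fun _ => majFirst 5 3)) ∧
      ∃ (k n r : ℕ) (ε : ℝ), 0 < ε ∧ ε < 1 / 2 ∧ Odd n ∧ Odd r ∧ 1 < r ∧ r < n ∧
        agreeProb ε n k (fun _ => majFirst n 1) < agreeProb ε n k (fun _ => majFirst n r) ∧
        agreeProb ε n k (fun _ => majFirst n n) < agreeProb ε n k (fun _ => majFirst n r) := by
  have h1 := agree_lt _ _ lt13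
  have h2 := agree_lt _ _ lt53
  exact ⟨⟨h1, h2⟩, 10, 5, 3, 0.26, by norm_num, by norm_num, by decide, by decide, by norm_num,
    by norm_num, h1, h2⟩
end
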